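/- arXiv:0712.3486 — 2 statements merged into one kernel-verified Lean document; each statement's English description precedes it below -/
import Mathlib

section
/- Let X be a separable Hilbert space, Λ ⊂ ℕ an infinite Hadamard lacunary set, and f ∈ H²_Λ(𝔻, X) such that (f̂(k))_{k≥0} is completely relatively compact in X. Then f is cyclic for the backward shift in H²(𝔻, X) if and only if X_*(f) = X. -/
open scoped InnerProductSpace ENNReal
noncomputable section

/-- The Hardy space `H²(𝔻, X)` identified with `ℓ²(ℕ, X)`. -/
abbrev H2 (X : Type*) [NormedAddCommGroup X] [InnerProductSpace ℂ X] : Type _ :=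
  lp (fun _ : ℕ => X) 2

variable {X : Type*} [NormedAddCommGroup X] [InnerProductSpace ℂ X]

/-- The backward shift `S*` on `H²(𝔻, X)`. -/
def bshift (f : H2 X) : H2 X :=
  ⟨fun n => f (n + 1), by
    have h : Summable fun n : ℕ => ‖f n‖ ^ (2 : ℝ≥0∞).toReal :=
      (memℓp_gen_iff (by norm_num)).1 (lp.memℓp f)
    exact memℓp_gen ((summable_nat_add_iff 1).2 h)⟩

/-- `E_F`: the smallest closed `S*`-invariant subspace containing the family `F`. -/
def EF (F : Set (H2 X)) : Submodule ℂ (H2 X) :=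
  (Submodule.span ℂ {g : H2 X | ∃ f ∈ F, ∃ n : ℕ, g = bshift^[n] f}).topologicalClosure

/-- `E_f` for a single function. -/
def Ef (f : H2 X) : Submodule ℂ (H2 X) :=
  EF {f}

/-- `X_*(F) = ⋂_m closed-span {f̂(k) : k ≥ m, f ∈ F}`. -/
def XstarF (F : Set (H2 X)) : Submodule ℂ X :=
  ⨅ m : ℕ, (Submodule.span ℂ {x : X | ∃ f ∈ F, ∃ k ≥ m, x = f k}).topologicalClosure

def Xstar (f : H2 X) : Submodule ℂ X := XstarF {f}

/-- `P : X → X` is an orthogonal projection: idempotent and self-adjoint. -/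
def IsOrthoProj {Y : Type*} [NormedAddCommGroup Y] [InnerProductSpace ℂ Y]
    (P : Y →L[ℂ] Y) : Prop :=
  (∀ x, P (P x) = P x) ∧ ∀ x y, ⟪P x, y⟫_ℂ = ⟪x, P y⟫_ℂ

/-- A sequence in a Hilbert space is completely relatively compact if for every orthogonal
projection `P` the normalized sequence `{P aₖ / ‖P aₖ‖ : P aₖ ≠ 0}` is relatively compact. -/
def CRC {Y : Type*} [NormedAddCommGroup Y] [InnerProductSpace ℂ Y] (a : ℕ → Y) : Prop :=
  ∀ P : Y →L[ℂ] Y, IsOrthoProj P →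
    IsCompact (closure {v : Y | ∃ k, P (a k) ≠ 0 ∧ v = ‖P (a k)‖⁻¹ • P (a k)})

/-- A subset of `ℕ` is Hadamard lacunary. -/
def HadLac (Λ : Set ℕ) : Prop :=
  ∃ d : ℝ, 1 < d ∧ ∀ m ∈ Λ, ∀ n ∈ Λ, m < n → d * m ≤ n

/-- The Fourier spectrum. -/
def spec (f : H2 X) : Set ℕ := {k : ℕ | f k ≠ 0}

/-- `H²(𝔻, Y)` for a subspace `Y ⊆ X`, as a submodule of `H²(𝔻, X)`. -/
def H2sub (Y : Submodule ℂ X) : Submodule ℂ (H2 X) where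
  carrier := {g : H2 X | ∀ n, g n ∈ Y}
  add_mem' := by
    intro a b ha hb n
    have : (↑(a + b) : ∀ _ : ℕ, X) n = a n + b n := by
      rw [lp.coeFn_add]; rfl
    rw [this]
    exact Y.add_mem (ha n) (hb n)
  zero_mem' := by
    intro n
    have : (↑(0 : H2 X) : ∀ _ : ℕ, X) n = 0 := by rw [lp.coeFn_zero]; rfl
    rw [this]
    exact Y.zero_mem
  smul_mem' := by
    intro c a ha n
    have : (↑(c • a) : ∀ _ : ℕ, X) n = c • a n := by rw [lp.coeFn_smul]; rfl
    rw [this]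
    exact Y.smul_mem c (ha n)

/-- A polynomial: finitely many nonzero Taylor coefficients. -/
def PolyH2 (f : H2 X) : Prop := {n : ℕ | f n ≠ 0}.Finite

/-! Let `g` be orthogonal to `E_f` and let `q k` be the projection of `f̂(k)` onto the closed span
of the coefficients of `g`. Orthogonality to `S*^(n-j) f` says that `⟪g j, q n⟫` is cancelled by
`∑_{i ≠ j} ⟪g i, q (n - j + i)⟫`. The gaps of the spectrum tend to infinity, so for large `n` in the
spectrum only the terms with `i > j` remain, and Cauchy–Schwarz bounds `|⟪g j, q n⟫|²` by the tail
`T n = ∑_{k > n} ‖q k‖²` times a factor which is summable over `n`, because each positive integer is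
a difference of two elements of the spectrum in boundedly many ways. Compactness of the directions
of `q` turns finitely many of these bounds into `∑ ‖q n‖² / T n < ∞`. By Dini's theorem on the tails
of a convergent series this forces `q n = 0` for large `n`, so the coefficients of `g` are
orthogonal to `X_*(f)`; thus `E_f` contains `H²(𝔻, X_*(f))`. -/

open Filter Topology Set

section TailsOfSeries

/-- The tail `∑_{k > n} c k` of the series `∑ c k`, the term of index `n` being excluded. Used to
express Dini's theorem on `∑ c n / ∑_{k > n} c k`. -/
def tsumAfter (c : ℕ → ℝ) (n : ℕ) : ℝ := ∑' k, c (k + (n + 1))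

variable {c : ℕ → ℝ}

lemma tsumAfter_nonneg (hc : 0 ≤ c) (n : ℕ) : 0 ≤ tsumAfter c n :=
  tsum_nonneg fun _ => hc _

lemma tsumAfter_pos (hc : 0 ≤ c) (hs : Summable c) {n k : ℕ} (hnk : n < k) (hk : c k ≠ 0) :
    0 < tsumAfter c n := by
  refine ((summable_nat_add_iff (n + 1)).2 hs).tsum_pos (fun _ => hc _) (k - (n + 1)) ?_
  rw [Nat.sub_add_cancel hnk]
  exact (hc k).lt_of_ne' hk

lemma antitone_tsumAfter (hc : 0 ≤ c) (hs : Summable c) : Antitone (tsumAfter c) := by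
  refine antitone_nat_of_succ_le fun n => ?_
  have hrec : tsumAfter c n = c (n + 1) + tsumAfter c (n + 1) := by
    simp only [tsumAfter, ((summable_nat_add_iff (n + 1)).2 hs).tsum_eq_zero_add, zero_add,
      add_assoc, add_comm 1]
  exact hrec ▸ le_add_of_nonneg_left (hc (n + 1))

lemma tendsto_tsumAfter (c : ℕ → ℝ) : Tendsto (tsumAfter c) atTop (𝓝 0) :=
  (tendsto_sum_nat_add c).comp (tendsto_add_atTop_nat 1)

theorem eventually_eq_zero_of_summable_div_tsumAfter (hc : 0 ≤ c) (hs : Summable c)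
    (h : Summable fun n => c n / tsumAfter c n) : ∀ᶠ n in atTop, c n = 0 := by
  by_contra hinf
  have hpos (n : ℕ) : 0 < tsumAfter c n := by
    obtain ⟨k, hnk, hk⟩ := (not_eventually.1 hinf).forall_exists_of_atTop (n + 1)
    exact tsumAfter_pos hc hs hnk hk
  obtain ⟨n, hn⟩ :=
    ((tendsto_tsumAfter fun n => c n / tsumAfter c n).eventually_lt_const one_pos).exists
  refine hn.not_ge ?_
  calc 1 = ∑' k, c (k + (n + 1)) / tsumAfter c n := by
        rw [tsum_div_const]
        exact (div_self (hpos n).ne').symm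
    _ ≤ ∑' k, c (k + (n + 1)) / tsumAfter c (k + (n + 1)) := by
        refine Summable.tsum_le_tsum (fun k => ?_)
          (((summable_nat_add_iff (n + 1)).2 hs).div_const _) ((summable_nat_add_iff (n + 1)).2 h)
        exact div_le_div_of_nonneg_left (hc _) (hpos _) (antitone_tsumAfter hc hs (by omega))

lemma summable_tsum_indicator_of_encard_le {ι κ : Type*} {R : ι → Set κ} {h : κ → ℝ}
    (h0 : 0 ≤ h) (hs : Summable h) {C : ℕ} (hC : ∀ k, {i | k ∈ R i}.encard ≤ C) :
    Summable fun i => ∑' k, (R i).indicator h k := by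
  classical
  refine summable_of_sum_le (c := ∑' k, C * h k)
    (fun i => tsum_nonneg fun k => indicator_nonneg (fun _ _ => h0 _) k) fun s => ?_
  rw [← Summable.tsum_finsetSum fun i _ => hs.indicator (R i)]
  refine Summable.tsum_le_tsum (fun k => ?_) (summable_sum fun i _ => hs.indicator (R i))
    (hs.mul_left _)
  have hcard : (s.filter fun i => k ∈ R i).card ≤ C := by
    rw [← Nat.cast_le (α := ℕ∞), ← encard_coe_eq_coe_finsetCard]
    exact (encard_le_encard fun i hi => (Finset.mem_filter.1 hi).2).trans (hC k)
  calc ∑ i ∈ s, (R i).indicator h k = (s.filter fun i => k ∈ R i).card * h k := by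
        simp only [indicator_apply, ← Finset.sum_filter, Finset.sum_const, nsmul_eq_mul]
    _ ≤ C * h k := by
        have := h0 k
        gcongr

end TailsOfSeries

section Differences

/-- The number of representations of a positive integer as a difference of two elements of `Λ` is
bounded, as it is for Hadamard lacunary sets and, with bound `1`, for Sidon sets. Here it stands for
the sparseness of the Fourier spectrum. -/
def HasBoundedDiffMultiplicity (Λ : Set ℕ) : Prop :=
  ∃ C : ℕ, ∀ d ≠ 0, {n | n ∈ Λ ∧ n + d ∈ Λ}.encard ≤ C

variable {Λ Λ' : Set ℕ}

lemma HasBoundedDiffMultiplicity.mono (hΛ : HasBoundedDiffMultiplicity Λ) (h : Λ' ⊆ Λ) :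
    HasBoundedDiffMultiplicity Λ' := by
  obtain ⟨C, hC⟩ := hΛ
  refine ⟨C, fun d hd => (encard_mono ?_).trans (hC d hd)⟩
  exact ofPred_subset_ofPred.2 fun n => And.imp (@h n) (@h (n + d))

lemma HasBoundedDiffMultiplicity.eventually_gap_gt (hΛ : HasBoundedDiffMultiplicity Λ) (j : ℕ) :
    ∀ᶠ n in atTop, n ∈ Λ → ∀ l ∈ Λ, l < n → l + j < n := by
  obtain ⟨C, hC⟩ := hΛ
  have hfin : (⋃ d ∈ Icc 1 j, (· + d) '' {l | l ∈ Λ ∧ l + d ∈ Λ}).Finite :=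
    (finite_Icc 1 j).biUnion fun d hd =>
      (finite_of_encard_le_coe (hC d (Nat.one_le_iff_ne_zero.1 hd.1))).image _
  filter_upwards [Nat.cofinite_eq_atTop ▸ hfin.eventually_cofinite_notMem] with n hn hnΛ l hl hln
  by_contra! hle
  have hld : l + (n - l) = n := by omega
  exact hn (mem_iUnion₂.2
    ⟨n - l, mem_Icc.2 ⟨by omega, by omega⟩, l, ⟨hl, by rwa [hld]⟩, hld⟩)

lemma HasBoundedDiffMultiplicity.summable_tsum_indicator (hΛ : HasBoundedDiffMultiplicity Λ)
    {h : ℕ → ℝ} (h0 : 0 ≤ h) (hs : Summable h) :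
    Summable fun n => ∑' k, {k | n ∈ Λ ∧ k + (n + 1) ∈ Λ}.indicator h k := by
  obtain ⟨C, hC⟩ := hΛ
  refine summable_tsum_indicator_of_encard_le h0 hs (C := C) fun k => ?_
  simpa only [mem_ofPred_eq, add_left_comm k, add_comm k] using hC (k + 1) k.succ_ne_zero

lemma HadLac.exists_encard_inter_le (hΛ : HadLac Λ) (r : ℝ) :
    ∃ C : ℕ, ∀ a : ℕ, a ≠ 0 → (Λ ∩ {n | a ≤ n ∧ n ≤ r * a}).encard ≤ C := by
  obtain ⟨d, hd, hgap⟩ := hΛ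
  refine ⟨⌊Real.logb d r⌋₊ + 1, fun a ha => ?_⟩
  have ha' : (0 : ℝ) < a := by positivity
  -- An element of `Λ` is at least `d` times the previous one, so `level` separates them.
  let level (n : ℕ) : ℕ := ⌊Real.logb d (n / a)⌋₊
  have hmaps : MapsTo level (Λ ∩ {n | a ≤ n ∧ n ≤ r * a}) (Iic ⌊Real.logb d r⌋₊) := by
    rintro n ⟨-, han, hnr⟩
    have : (0 : ℝ) < n := ha'.trans_le (mod_cast han)
    exact Nat.floor_mono (Real.logb_le_logb_of_le hd (by positivity) ((div_le_iff₀ ha').2 hnr))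
  have hmono : StrictMonoOn level (Λ ∩ {n | a ≤ n ∧ n ≤ r * a}) := by
    rintro m ⟨hm, ham, -⟩ n ⟨hn, -, -⟩ hmn
    have hma : 1 ≤ (m : ℝ) / a := (one_le_div ha').2 (mod_cast ham)
    have hlog : Real.logb d (m / a) + 1 ≤ Real.logb d (n / a) := by
      rw [← Real.logb_self_eq_one hd, ← Real.logb_mul (by positivity) (by positivity)]
      refine Real.logb_le_logb_of_le hd (by positivity) ?_
      rw [div_mul_eq_mul_div, mul_comm]
      exact div_le_div_of_nonneg_right (hgap m hm n hn hmn) ha'.le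
    refine Nat.lt_of_succ_le ?_
    rw [Nat.succ_eq_add_one, ← Nat.floor_add_one (Real.logb_nonneg hd hma)]
    exact Nat.floor_mono hlog
  refine (encard_le_encard_of_injOn hmaps hmono.injOn).trans ?_
  rw [← Finset.coe_Iic, encard_coe_eq_coe_finsetCard, Nat.card_Iic]

lemma HadLac.hasBoundedDiffMultiplicity (hΛ : HadLac Λ) : HasBoundedDiffMultiplicity Λ := by
  obtain ⟨d, hd, hgap⟩ := id hΛ
  obtain ⟨C, hC⟩ := hΛ.exists_encard_inter_le (d / (d - 1))
  refine ⟨C, fun k hk => le_trans ?_ (hC k hk)⟩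
  refine encard_le_encard_of_injOn (f := (· + k)) ?_ (add_left_injective k).injOn
  rintro n ⟨hn, hnk⟩
  have hd' : 0 < d - 1 := sub_pos.2 hd
  refine ⟨hnk, k.le_add_left n, ?_⟩
  have := hgap n hn (n + k) hnk (by omega)
  push_cast at this ⊢
  rw [div_mul_eq_mul_div, le_div_iff₀ hd']
  linarith

end Differences

section InnerProductSpace

variable {𝕜 E ι : Type*} [RCLike 𝕜] [NormedAddCommGroup E] [InnerProductSpace 𝕜 E]

lemma memℓp_two_iff_summable_norm_sq {a : ι → E} :
    Memℓp a 2 ↔ Summable fun i => ‖a i‖ ^ 2 := by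
  simp [memℓp_gen_iff]

lemma summable_inner_of_summable_norm_sq {a b : ι → E} (ha : Summable fun i => ‖a i‖ ^ 2)
    (hb : Summable fun i => ‖b i‖ ^ 2) : Summable fun i => ⟪a i, b i⟫_𝕜 :=
  lp.summable_inner (⟨a, memℓp_two_iff_summable_norm_sq.2 ha⟩ : lp (fun _ : ι => E) 2)
    ⟨b, memℓp_two_iff_summable_norm_sq.2 hb⟩

lemma norm_tsum_inner_sq_le {a b : ι → E} (ha : Summable fun i => ‖a i‖ ^ 2)
    (hb : Summable fun i => ‖b i‖ ^ 2) :
    ‖∑' i, ⟪a i, b i⟫_𝕜‖ ^ 2 ≤ (∑' i, ‖a i‖ ^ 2) * ∑' i, ‖b i‖ ^ 2 := by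
  have hnorm (x : lp (fun _ : ι => E) 2) : ‖x‖ ^ 2 = ∑' i, ‖x i‖ ^ 2 :=
    mod_cast lp.norm_rpow_eq_tsum (by norm_num) x
  let A : lp (fun _ : ι => E) 2 := ⟨a, memℓp_two_iff_summable_norm_sq.2 ha⟩
  let B : lp (fun _ : ι => E) 2 := ⟨b, memℓp_two_iff_summable_norm_sq.2 hb⟩
  calc ‖⟪A, B⟫_𝕜‖ ^ 2 ≤ (‖A‖ * ‖B‖) ^ 2 := by gcongr; exact norm_inner_le_norm A B
    _ = (∑' i, ‖a i‖ ^ 2) * ∑' i, ‖b i‖ ^ 2 := by rw [mul_pow, hnorm, hnorm]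

lemma norm_tsum_inner_sq_le_of_eq_zero {a b : ι → E} (ha : Summable fun i => ‖a i‖ ^ 2)
    (hb : Summable fun i => ‖b i‖ ^ 2) {S : Set ι} (hS : ∀ i ∉ S, b i = 0) :
    ‖∑' i, ⟪a i, b i⟫_𝕜‖ ^ 2 ≤ (∑' i, S.indicator (fun i => ‖a i‖ ^ 2) i) * ∑' i, ‖b i‖ ^ 2 := by
  have hinner (i : ι) : ⟪a i, b i⟫_𝕜 = ⟪S.indicator a i, b i⟫_𝕜 := by
    by_cases hi : i ∈ S <;> simp [hi, hS]
  have hnorm (i : ι) : S.indicator (fun i => ‖a i‖ ^ 2) i = ‖S.indicator a i‖ ^ 2 := by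
    by_cases hi : i ∈ S <;> simp [hi]
  rw [tsum_congr hinner, tsum_congr hnorm]
  exact norm_tsum_inner_sq_le (by simpa only [← hnorm] using ha.indicator S) hb

lemma exists_pos_le_sum_norm_inner_sq {K : Set E} (hK : IsCompact K) {g : ι → E}
    (hg : ∀ u ∈ K, ∃ j, ⟪g j, u⟫_𝕜 ≠ 0) :
    ∃ (J : Finset ι) (δ : ℝ), 0 < δ ∧ ∀ u ∈ K, δ ≤ ∑ j ∈ J, ‖⟪g j, u⟫_𝕜‖ ^ 2 := by
  obtain ⟨J, hJ⟩ := hK.elim_finite_subcover (fun j => {u | ⟪g j, u⟫_𝕜 ≠ 0})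
    (fun j => isOpen_ne_fun (by fun_prop) continuous_const) fun u hu => mem_iUnion.2 (hg u hu)
  refine ⟨J, hK.exists_forall_le' (by fun_prop) fun u hu => ?_⟩
  obtain ⟨j, hjJ, hj⟩ := mem_iUnion₂.1 (hJ hu)
  exact Finset.sum_pos' (fun _ _ => sq_nonneg _) ⟨j, hjJ, pow_pos (norm_pos_iff.2 hj) 2⟩

lemma eq_zero_of_mem_topologicalClosure_span_range {g : ι → E} {u : E}
    (hu : u ∈ (Submodule.span 𝕜 (range g)).topologicalClosure) (h : ∀ j, ⟪g j, u⟫_𝕜 = 0) :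
    u = 0 := by
  have hle : (Submodule.span 𝕜 (range g)).topologicalClosure ≤ (𝕜 ∙ u)ᗮ := by
    refine Submodule.topologicalClosure_minimal _ (Submodule.span_le.2 ?_)
      (Submodule.isClosed_orthogonal _)
    rintro _ ⟨j, rfl⟩
    exact Submodule.mem_orthogonal_singleton_iff_inner_left.2 (h j)
  exact inner_self_eq_zero.1 (Submodule.mem_orthogonal_singleton_iff_inner_left.1 (hle hu))

lemma exists_pos_mul_norm_sq_le_sum_norm_inner_sq [NormedSpace ℝ E] [IsScalarTower ℝ 𝕜 E]
    {κ : Type*} {g : ι → E} {q : κ → E}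
    (hq : ∀ k, q k ∈ (Submodule.span 𝕜 (range g)).topologicalClosure)
    (hcpt : IsCompact (closure {v | ∃ k, q k ≠ 0 ∧ v = ‖q k‖⁻¹ • q k})) :
    ∃ (J : Finset ι) (δ : ℝ), 0 < δ ∧ ∀ k, δ * ‖q k‖ ^ 2 ≤ ∑ j ∈ J, ‖⟪g j, q k⟫_𝕜‖ ^ 2 := by
  set Y := (Submodule.span 𝕜 (range g)).topologicalClosure
  have hK : closure {v | ∃ k, q k ≠ 0 ∧ v = ‖q k‖⁻¹ • q k} ⊆ Y ∩ Metric.sphere 0 1 := by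
    refine closure_minimal ?_
      ((Submodule.isClosed_topologicalClosure _).inter Metric.isClosed_sphere)
    rintro _ ⟨k, hk, rfl⟩
    refine ⟨?_, by simp [norm_smul, hk]⟩
    rw [← algebraMap_smul 𝕜]
    exact Y.smul_mem _ (hq k)
  obtain ⟨J, δ, hδ, hJ⟩ := exists_pos_le_sum_norm_inner_sq (𝕜 := 𝕜) (g := g) hcpt fun u hu => by
    by_contra! h
    have hu0 : u = 0 := eq_zero_of_mem_topologicalClosure_span_range (hK hu).1 h
    simpa [hu0] using (hK hu).2
  refine ⟨J, δ, hδ, fun k => ?_⟩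
  rcases eq_or_ne (q k) 0 with hk | hk
  · simp [hk]
  · have hδk := hJ _ (subset_closure ⟨k, hk, rfl⟩)
    simp only [inner_smul_right_eq_smul, norm_smul, norm_inv, norm_norm, mul_pow,
      ← Finset.mul_sum, inv_pow] at hδk
    rwa [le_inv_mul_iff₀ (by positivity), mul_comm] at hδk

end InnerProductSpace

section ShiftOrthogonality

variable {𝕜 E : Type*} [RCLike 𝕜] [NormedAddCommGroup E] [InnerProductSpace 𝕜 E] {g q : ℕ → E}

lemma inner_eq_neg_tsum_of_tsum_inner_shift_eq_zero (hg : Summable fun n => ‖g n‖ ^ 2)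
    (hq : Summable fun n => ‖q n‖ ^ 2) {j m : ℕ} (horth : ∑' i, ⟪g i, q (i + m)⟫_𝕜 = 0)
    (hzero : ∀ i < j, q (i + m) = 0) :
    ⟪g j, q (j + m)⟫_𝕜 = -∑' k, ⟪g (k + (j + 1)), q (k + (j + m + 1))⟫_𝕜 := by
  have hsplit := (summable_inner_of_summable_norm_sq (𝕜 := 𝕜) hg
    ((summable_nat_add_iff m).2 hq)).sum_add_tsum_nat_add (j + 1)
  have hhead : ∑ i ∈ Finset.range j, ⟪g i, q (i + m)⟫_𝕜 = 0 :=
    Finset.sum_eq_zero fun i hi => by rw [hzero i (Finset.mem_range.1 hi), inner_zero_right]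
  rw [horth, Finset.sum_range_succ, hhead, zero_add] at hsplit
  simpa only [add_assoc, add_comm 1 m] using eq_neg_of_add_eq_zero_left hsplit

lemma norm_inner_sq_le_mul_tsumAfter (hg : Summable fun n => ‖g n‖ ^ 2)
    (hq : Summable fun n => ‖q n‖ ^ 2) {j m : ℕ} (horth : ∑' i, ⟪g i, q (i + m)⟫_𝕜 = 0)
    (hzero : ∀ i < j, q (i + m) = 0) {S : Set ℕ} (hS : ∀ k ∉ S, q (k + (j + m + 1)) = 0) :
    ‖⟪g j, q (j + m)⟫_𝕜‖ ^ 2 ≤ (∑' k, S.indicator (fun k => ‖g (k + (j + 1))‖ ^ 2) k) *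
      tsumAfter (fun n => ‖q n‖ ^ 2) (j + m) := by
  rw [inner_eq_neg_tsum_of_tsum_inner_shift_eq_zero hg hq horth hzero, norm_neg]
  exact norm_tsum_inner_sq_le_of_eq_zero (hg.comp_injective (add_left_injective (j + 1)))
    (hq.comp_injective (add_left_injective (j + m + 1))) hS

lemma eventually_norm_inner_sq_le_mul_tsumAfter (hg : Summable fun n => ‖g n‖ ^ 2)
    (hq : Summable fun n => ‖q n‖ ^ 2) (hsupp : HasBoundedDiffMultiplicity (Function.support q))
    (horth : ∀ m, ∑' i, ⟪g i, q (i + m)⟫_𝕜 = 0) (j : ℕ) :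
    ∀ᶠ n in atTop, ‖⟪g j, q n⟫_𝕜‖ ^ 2 ≤
      (∑' k, {k | n ∈ Function.support q ∧ k + (n + 1) ∈ Function.support q}.indicator
        (fun k => ‖g (k + (j + 1))‖ ^ 2) k) * tsumAfter (fun n => ‖q n‖ ^ 2) n := by
  filter_upwards [hsupp.eventually_gap_gt j, eventually_ge_atTop j] with n hgap hjn
  obtain ⟨m, rfl⟩ := Nat.exists_eq_add_of_le hjn
  by_cases hn : j + m ∈ Function.support q
  · refine norm_inner_sq_le_mul_tsumAfter hg hq (horth m) (fun i hi => ?_) fun k hk => ?_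
    · by_contra h
      have := hgap hn (i + m) h (by omega)
      omega
    · by_contra h
      exact hk ⟨hn, h⟩
  · rw [Function.notMem_support.1 hn, inner_zero_right, norm_zero, zero_pow two_ne_zero]
    exact mul_nonneg (tsum_nonneg fun k => indicator_nonneg (fun _ _ => sq_nonneg _) k)
      (tsumAfter_nonneg (fun _ => sq_nonneg _) _)

lemma summable_norm_inner_sq_div_tsumAfter (hg : Summable fun n => ‖g n‖ ^ 2)
    (hq : Summable fun n => ‖q n‖ ^ 2) (hsupp : HasBoundedDiffMultiplicity (Function.support q))
    (horth : ∀ m, ∑' i, ⟪g i, q (i + m)⟫_𝕜 = 0) (j : ℕ) :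
    Summable fun n => ‖⟪g j, q n⟫_𝕜‖ ^ 2 / tsumAfter (fun n => ‖q n‖ ^ 2) n := by
  have htail (n : ℕ) : 0 ≤ tsumAfter (fun n => ‖q n‖ ^ 2) n :=
    tsumAfter_nonneg (fun _ => sq_nonneg _) n
  refine (hsupp.summable_tsum_indicator (fun _ => sq_nonneg _)
    ((summable_nat_add_iff (j + 1)).2 hg)).of_norm_bounded_eventually_nat ?_
  filter_upwards [eventually_norm_inner_sq_le_mul_tsumAfter hg hq hsupp horth j] with n hn
  rw [Real.norm_of_nonneg (div_nonneg (sq_nonneg _) (htail n))]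
  exact div_le_of_le_mul₀ (htail n)
    (tsum_nonneg fun k => indicator_nonneg (fun _ _ => sq_nonneg _) k) hn

theorem eventually_eq_zero_of_tsum_inner_shift_eq_zero (hg : Summable fun n => ‖g n‖ ^ 2)
    (hq : Summable fun n => ‖q n‖ ^ 2) (hsupp : HasBoundedDiffMultiplicity (Function.support q))
    (horth : ∀ m, ∑' i, ⟪g i, q (i + m)⟫_𝕜 = 0) {J : Finset ℕ} {δ : ℝ} (hδ : 0 < δ)
    (hJ : ∀ n, δ * ‖q n‖ ^ 2 ≤ ∑ j ∈ J, ‖⟪g j, q n⟫_𝕜‖ ^ 2) : ∀ᶠ n in atTop, q n = 0 := by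
  have htail (n : ℕ) : 0 ≤ tsumAfter (fun n => ‖q n‖ ^ 2) n :=
    tsumAfter_nonneg (fun _ => sq_nonneg _) n
  have hsum : Summable fun n => ‖q n‖ ^ 2 / tsumAfter (fun n => ‖q n‖ ^ 2) n := by
    refine Summable.of_nonneg_of_le (fun n => div_nonneg (sq_nonneg _) (htail n)) (fun n => ?_)
      ((summable_sum fun j (_ : j ∈ J) =>
        summable_norm_inner_sq_div_tsumAfter hg hq hsupp horth j).mul_left δ⁻¹)
    rw [← Finset.sum_div, ← mul_div_assoc]
    exact div_le_div_of_nonneg_right ((le_inv_mul_iff₀ hδ).2 (hJ n)) (htail n)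
  filter_upwards [eventually_eq_zero_of_summable_div_tsumAfter (fun _ => sq_nonneg _) hq hsum]
    with n hn
  simpa using hn

end ShiftOrthogonality

section HardySpace

lemma isOrthoProj_starProjection (U : Submodule ℂ X) [U.HasOrthogonalProjection] :
    IsOrthoProj U.starProjection :=
  ⟨fun x => Submodule.starProjection_eq_self_iff.2 (U.starProjection_apply_mem x),
    U.inner_starProjection_left_eq_right⟩

lemma iterate_bshift_apply (f : H2 X) (n k : ℕ) : (bshift^[n] f) k = f (k + n) := by
  induction n generalizing k with
  | zero => rfl
  | succ n ih =>
    calc (bshift^[n + 1] f) k = (bshift^[n] f) (k + 1) := by rw [Function.iterate_succ_apply']; rfl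
      _ = f (k + (n + 1)) := by rw [ih, add_assoc, add_comm 1]

lemma XstarF_eq_top_of_EF_eq_top {F : Set (H2 X)} (h : EF F = ⊤) : XstarF F = ⊤ := by
  refine iInf_eq_top.2 fun m => eq_top_iff.2 fun x _ => ?_
  set K := (Submodule.span ℂ {x : X | ∃ f ∈ F, ∃ k ≥ m, x = f k}).topologicalClosure
  have hle : EF F ≤ K.comap (lp.evalCLM ℂ (fun _ : ℕ => X) 2 m : H2 X →ₗ[ℂ] X) := by
    refine Submodule.topologicalClosure_minimal _ (Submodule.span_le.2 ?_)
      ((Submodule.isClosed_topologicalClosure _).preimage (lp.evalCLM ℂ _ 2 m).continuous)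
    rintro _ ⟨f, hf, n, rfl⟩
    exact Submodule.le_topologicalClosure _
      (Submodule.subset_span ⟨f, hf, m + n, m.le_add_right n, iterate_bshift_apply f n m⟩)
  have hx : lp.single 2 m x ∈ EF F := h ▸ Submodule.mem_top
  have hxK : (lp.single 2 m x : H2 X) m ∈ K := hle hx
  rwa [lp.single_apply_self] at hxK

lemma Xstar_le_of_eventually_mem {f : H2 X} {W : Submodule ℂ X} (hW : IsClosed (W : Set X))
    (h : ∀ᶠ n in atTop, f n ∈ W) : Xstar f ≤ W := by
  obtain ⟨m, hm⟩ := eventually_atTop.1 h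
  refine (iInf_le _ m).trans (Submodule.topologicalClosure_minimal _ (Submodule.span_le.2 ?_) hW)
  rintro _ ⟨_, rfl, k, hk, rfl⟩
  exact hm k hk

lemma tsum_inner_shift_eq_zero_of_mem_orthogonal_Ef {f g : H2 X} (hg : g ∈ (Ef f)ᗮ) (m : ℕ) :
    ∑' i, ⟪g i, f (i + m)⟫_ℂ = 0 := by
  have hmem : bshift^[m] f ∈ Ef f :=
    Submodule.le_topologicalClosure _ (Submodule.subset_span ⟨f, rfl, m, rfl⟩)
  simpa only [lp.inner_eq_tsum, iterate_bshift_apply] using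
    Submodule.inner_left_of_mem_orthogonal hmem hg

variable [CompleteSpace X]

lemma Xstar_le_orthogonal_of_mem_orthogonal_Ef {f g : H2 X}
    (hf : HasBoundedDiffMultiplicity (spec f)) (hcrc : CRC fun k : ℕ => f k) (hg : g ∈ (Ef f)ᗮ) :
    Xstar f ≤ (Submodule.span ℂ (range g)).topologicalClosureᗮ := by
  set Y := (Submodule.span ℂ (range g)).topologicalClosure
  have : CompleteSpace Y := (Submodule.isClosed_topologicalClosure _).completeSpace_coe
  have hgY (j : ℕ) : Y.starProjection (g j) = g j := Submodule.starProjection_eq_self_iff.2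
    (Submodule.le_topologicalClosure _ (Submodule.subset_span ⟨j, rfl⟩))
  let q (n : ℕ) : X := Y.starProjection (f n)
  have hsq (h : H2 X) : Summable fun n => ‖h n‖ ^ 2 :=
    memℓp_two_iff_summable_norm_sq.1 (lp.memℓp h)
  have hq : Summable fun n => ‖q n‖ ^ 2 := (hsq f).of_nonneg_of_le (fun _ => sq_nonneg _)
    fun n => pow_le_pow_left₀ (norm_nonneg _) (Y.norm_starProjection_apply_le _) 2
  have hsupp : Function.support q ⊆ spec f := fun n hn hfn => hn (by simp [q, hfn])
  have horth (m : ℕ) : ∑' i, ⟪g i, q (i + m)⟫_ℂ = 0 := by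
    simpa only [q, ← Y.inner_starProjection_left_eq_right, hgY] using
      tsum_inner_shift_eq_zero_of_mem_orthogonal_Ef hg m
  obtain ⟨J, δ, hδ, hJ⟩ := exists_pos_mul_norm_sq_le_sum_norm_inner_sq
    (fun n => Y.starProjection_apply_mem (f n)) (hcrc _ (isOrthoProj_starProjection Y))
  refine Xstar_le_of_eventually_mem (Submodule.isClosed_orthogonal Y) ?_
  filter_upwards [eventually_eq_zero_of_tsum_inner_shift_eq_zero (hsq g) hq (hf.mono hsupp) horth
    hδ hJ] with n hn
  exact Y.starProjection_apply_eq_zero_iff.1 hn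

theorem H2sub_Xstar_le_Ef {f : H2 X} (hf : HasBoundedDiffMultiplicity (spec f))
    (hcrc : CRC fun k : ℕ => f k) : H2sub (Xstar f) ≤ Ef f := by
  intro h hh
  have : CompleteSpace (Ef f) := (Submodule.isClosed_topologicalClosure _).completeSpace_coe
  rw [← (Ef f).orthogonal_orthogonal, Submodule.mem_orthogonal]
  intro g hg
  have hcoeff (j : ℕ) : ⟪g j, h j⟫_ℂ = 0 := Submodule.inner_right_of_mem_orthogonal
    (Submodule.le_topologicalClosure _ (Submodule.subset_span (mem_range_self j)))
    (Xstar_le_orthogonal_of_mem_orthogonal_Ef hf hcrc hg (hh j))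
  simp only [lp.inner_eq_tsum, hcoeff, tsum_zero]

theorem cyclic_iff_Xstar_eq_top_general {f : H2 X} (hf : HasBoundedDiffMultiplicity (spec f))
    (hcrc : CRC fun k : ℕ => f k) : Ef f = ⊤ ↔ Xstar f = ⊤ :=
  ⟨XstarF_eq_top_of_EF_eq_top, fun hX => eq_top_iff.2 fun _ _ =>
    H2sub_Xstar_le_Ef hf hcrc fun _ => hX ▸ Submodule.mem_top⟩

end HardySpace

/-- A lacunary series with c.r.c. coefficient sequence is cyclic for the backward shift in
`H²(𝔻, X)` iff `X_*(f) = X`. -/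
theorem cyclic_iff_Xstar_eq_top {X : Type*} [NormedAddCommGroup X] [InnerProductSpace ℂ X] [CompleteSpace X]
    [TopologicalSpace.SeparableSpace X]
    (Λ : Set ℕ) (hΛ : HadLac Λ) (hΛinf : Λ.Infinite)
    (f : H2 X) (hspec : spec f ⊆ Λ) (hcrc : CRC fun k : ℕ => f k) :
    Ef f = ⊤ ↔ Xstar f = ⊤ :=
  cyclic_iff_Xstar_eq_top_general (hΛ.hasBoundedDiffMultiplicity.mono hspec) hcrc

end
end

section
/- Let X be a separable Hilbert space and f ∈ H²(𝔻, X) a lacunary series whose coefficient sequence (f̂(k))_{k≥0} is completely relatively compact. Let P denote the orthogonal projection of H²(𝔻, X) onto H²(𝔻, X_∞(f)). Then: (i) σ(f − Pf) ⊆ σ(f); and (ii) f − Pf is a polynomial. -/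
open scoped InnerProductSpace ENNReal
noncomputable section

variable {X : Type*} [NormedAddCommGroup X] [InnerProductSpace ℂ X]

/-- `X_∞(f)`: the closed span of all closed subspaces `Y ⊆ X` with
`H²(𝔻, Y) ⊆ E_{S*^N f}` for every `N ≥ 0`. -/
def Xinf (f : H2 X) : Submodule ℂ X :=
  (Submodule.span ℂ {x : X | ∃ Y : Submodule ℂ X, IsClosed (Y : Set X) ∧
      (∀ N : ℕ, H2sub Y ≤ Ef (bshift^[N] f)) ∧ x ∈ Y}).topologicalClosure

/-- The smallest closed `S*^N`-invariant subspace containing `f`;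
`f` is cyclic for `S*^N` iff this equals `⊤`. -/
def EfPow (f : H2 X) (N : ℕ) : Submodule ℂ (H2 X) :=
  (Submodule.span ℂ {g : H2 X | ∃ k : ℕ, g = bshift^[N * k] f}).topologicalClosure


/-!
Put `h = f - Pf`, whose coefficients are the projections of those of `f` to `X_∞(f)ᗮ`. Suppose that
`h` is not a polynomial. By the Abel-Dini theorem the weights `wₙ = ‖ĥ(n)‖² / ‖S*ⁿ⁺¹h‖²` have a
divergent sum, so by compactness some unit vector `v ∈ X_∞(f)ᗮ` has the property that the `wₙ` with
`ĥ(n) / ‖ĥ(n)‖` close to `v` already have a divergent sum. Fix `m` and average the functions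
`S*ⁿ⁻ᵐh / ‖ĥ(n)‖` over finitely many such large `n`, with weights `wₙ`. The gaps of the spectrum
annihilate the coefficients below `m`, the coefficient at `m` is close to `v`, and since each
difference occurs at most `C` times in the spectrum, the coefficients above `m` are almost
orthogonal: their contribution has squared norm at most `C / ∑ wₙ`. Hence `zᵐ v ∈ E_{S*^N f}` for
all `m` and `N`, so `v ∈ X_∞(f)`, which contradicts `v ⟂ X_∞(f)` and `‖v‖ = 1`.
-/

open Filter Topology Set

/-- The multiplicity of differences in `Λ` is bounded: some constant bounds, for every `r > 0`, the
number of pairs of elements of `Λ` at distance `r`. Hadamard lacunary sets have this property. -/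
def BddDifferences (Λ : Set ℕ) : Prop :=
  ∃ C : ℕ, ∀ r > 0, {n | n ∈ Λ ∧ n + r ∈ Λ}.encard ≤ C

/-- The set of directions `aₖ / ‖aₖ‖` of the nonzero terms of a sequence; `CRC a` says that it is
relatively compact for every image of `a` under an orthogonal projection. -/
def directions (a : ℕ → X) : Set X :=
  {v | ∃ k, a k ≠ 0 ∧ v = ‖a k‖⁻¹ • a k}

/-- The weight `‖ĥ(n)‖² / ‖S*ⁿ⁺¹h‖²`, comparing a coefficient with the tail that follows it. -/
def tailWeight (h : H2 X) (n : ℕ) : ℝ :=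
  ‖h n‖ ^ 2 / ‖bshift^[n + 1] h‖ ^ 2

/-- The index `n` lies in the spectrum of `h` and is preceded by `m` indices outside it, so that
`S*ⁿ⁻ᵐh` starts with the term `zᵐ ĥ(n)`. -/
def GapBefore (h : H2 X) (m n : ℕ) : Prop :=
  m ≤ n ∧ h n ≠ 0 ∧ ∀ i < m, h (n - m + i) = 0

/-- The function `S*ⁿ⁻ᵐh` without its term `zᵐ ĥ(n)`; only meaningful for `m ≤ n`. -/
def shiftRemainder (h : H2 X) (m n : ℕ) : H2 X :=
  bshift^[n - m] h - lp.single 2 m (h n)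

section Series

theorem not_summable_sub_div_of_tendsto_zero {t : ℕ → ℝ} (hpos : ∀ n, 0 < t n)
    (hlim : Tendsto t atTop (𝓝 0)) : ¬ Summable fun n => (t n - t (n + 1)) / t (n + 1) := by
  set a : ℕ → ℝ := fun n => (t n - t (n + 1)) / t (n + 1)
  intro hsum
  have hstep (n : ℕ) : t n ≤ t (n + 1) * Real.exp (a n) := by
    have hne := (hpos (n + 1)).ne'
    calc t n = t (n + 1) * (a n + 1) := by simp only [a]; field_simp; ring
      _ ≤ t (n + 1) * Real.exp (a n) :=
        mul_le_mul_of_nonneg_left (Real.add_one_le_exp _) (hpos _).le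
  have hprod (n : ℕ) : t 0 ≤ t n * Real.exp (∑ i ∈ Finset.range n, a i) := by
    induction n with
    | zero => simp
    | succ n ih =>
      rw [Finset.sum_range_succ, add_comm (∑ i ∈ _, a i), Real.exp_add, ← mul_assoc]
      exact ih.trans (mul_le_mul_of_nonneg_right (hstep n) (Real.exp_pos _).le)
  have hzero := hlim.mul ((Real.continuous_exp.tendsto _).comp hsum.hasSum.tendsto_sum_nat)
  rw [zero_mul] at hzero
  exact (hpos 0).not_ge (ge_of_tendsto' hzero hprod)

theorem exists_finset_le_sum_of_not_summable {a : ℕ → ℝ} (ha : ∀ n, 0 ≤ a n) (hns : ¬ Summable a)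
    (n₀ : ℕ) (M : ℝ) : ∃ F : Finset ℕ, (∀ n ∈ F, n₀ ≤ n ∧ a n ≠ 0) ∧ M ≤ ∑ n ∈ F, a n := by
  classical
  have htail : ¬ Summable fun i => a (i + n₀) := mt (summable_nat_add_iff n₀).1 hns
  rw [not_summable_iff_tendsto_nat_atTop_of_nonneg fun _ => ha _] at htail
  obtain ⟨p, hp⟩ := (htail.eventually_ge_atTop M).exists
  refine ⟨{n ∈ Finset.Ico n₀ (n₀ + p) | a n ≠ 0}, fun n hn => ?_, ?_⟩
  · obtain ⟨hn, hne⟩ := Finset.mem_filter.1 hn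
    exact ⟨(Finset.mem_Ico.1 hn).1, hne⟩
  · rw [Finset.sum_filter_ne_zero, Finset.sum_Ico_eq_sum_range, Nat.add_sub_cancel_left]
    simpa only [add_comm n₀] using hp

theorem exists_forall_nhds_not_summable_indicator {ι α E : Type*} [TopologicalSpace α]
    [AddCommGroup E] [UniformSpace E] [IsUniformAddGroup E] [CompleteSpace E] {K : Set α}
    (hK : IsCompact K) {u : ι → α} {w : ι → E} (hns : ¬ Summable ((u ⁻¹' K).indicator w)) :
    ∃ v ∈ K, ∀ U ∈ 𝓝 v, ¬ Summable ((u ⁻¹' U).indicator w) := by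
  by_contra! hlocal
  refine hns (hK.induction_on (p := fun s => Summable ((u ⁻¹' s).indicator w)) ?_ ?_ ?_ ?_)
  · simp [summable_zero]
  · intro s t hst ht
    simpa only [indicator_indicator, inter_eq_left.2 (preimage_mono hst)]
      using ht.indicator (u ⁻¹' s)
  · intro s t hs ht
    have hdiff : u ⁻¹' (s ∪ t) = u ⁻¹' s ∪ (u ⁻¹' s)ᶜ ∩ u ⁻¹' t := by
      rw [preimage_union, inter_comm, ← sdiff_eq, union_sdiff_self]
    rw [hdiff, indicator_union_of_disjoint
      (disjoint_compl_right.mono_right inter_subset_left), ← indicator_indicator]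
    exact hs.add (ht.indicator _)
  · intro x hx
    obtain ⟨U, hU, hsum⟩ := hlocal x hx
    exact ⟨U, mem_nhdsWithin_of_mem_nhds hU, hsum⟩

end Series

section BoundedOverlap

theorem norm_sum_sq_le_mul_sum_norm_sq {ι E : Type*} [SeminormedAddCommGroup E] {F : Finset ι}
    {x : ι → E} {C : ℕ} (hC : {n | n ∈ F ∧ x n ≠ 0}.encard ≤ C) :
    ‖∑ n ∈ F, x n‖ ^ 2 ≤ C * ∑ n ∈ F, ‖x n‖ ^ 2 := by
  classical
  have hcard : ({n ∈ F | x n ≠ 0}.card : ℝ) ≤ C := by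
    rw [← Finset.coe_filter, encard_coe_eq_coe_finsetCard] at hC
    exact_mod_cast hC
  calc ‖∑ n ∈ F, x n‖ ^ 2 = ‖∑ n ∈ F with x n ≠ 0, x n‖ ^ 2 := by rw [Finset.sum_filter_ne_zero]
    _ ≤ (∑ n ∈ F with x n ≠ 0, ‖x n‖) ^ 2 := by gcongr; exact norm_sum_le _ _
    _ ≤ {n ∈ F | x n ≠ 0}.card * ∑ n ∈ F with x n ≠ 0, ‖x n‖ ^ 2 := sq_sum_le_card_mul_sum_sq
    _ ≤ C * ∑ n ∈ F, ‖x n‖ ^ 2 := by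
      gcongr
      exact Finset.filter_subset _ _

variable {ι α : Type*} {E : α → Type*} [∀ i, NormedAddCommGroup (E i)]

theorem hasSum_norm_sq_lp_two (f : lp E 2) : HasSum (fun i => ‖f i‖ ^ 2) (‖f‖ ^ 2) := by
  simpa using lp.hasSum_norm (p := 2) (by norm_num) f

theorem norm_sum_sq_le_of_overlap_le {F : Finset ι} {g : ι → lp E 2} {C : ℕ}
    (hC : ∀ i, {n | n ∈ F ∧ g n i ≠ 0}.encard ≤ C) :
    ‖∑ n ∈ F, g n‖ ^ 2 ≤ C * ∑ n ∈ F, ‖g n‖ ^ 2 := by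
  have hright : HasSum (fun i => C * ∑ n ∈ F, ‖g n i‖ ^ 2) (C * ∑ n ∈ F, ‖g n‖ ^ 2) :=
    (hasSum_sum fun n _ => hasSum_norm_sq_lp_two (g n)).mul_left _
  refine hasSum_le (fun i => ?_) (hasSum_norm_sq_lp_two _) hright
  rw [lp.coeFn_sum, Finset.sum_apply]
  exact norm_sum_sq_le_mul_sum_norm_sq (hC i)

variable [∀ i, NormedSpace ℝ (E i)]

theorem encard_smul_overlap_le {F : Finset ι} {g : ι → lp E 2} {C : ℕ}
    (hC : ∀ i, {n | n ∈ F ∧ g n i ≠ 0}.encard ≤ C) (c : ι → ℝ) (i : α) :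
    {n | n ∈ F ∧ (c n • g n) i ≠ 0}.encard ≤ C := by
  refine (encard_le_encard ?_).trans (hC i)
  rintro n ⟨hn, hne⟩
  rw [lp.coeFn_smul, Pi.smul_apply] at hne
  exact ⟨hn, right_ne_zero_of_smul hne⟩

theorem norm_centerMass_sq_le_of_overlap_le {F : Finset ι}
    {w : ι → ℝ} {g : ι → lp E 2} {C : ℕ} (hC : ∀ i, {n | n ∈ F ∧ g n i ≠ 0}.encard ≤ C)
    (hw : ∀ n ∈ F, 0 ≤ w n) (hwg : ∀ n ∈ F, w n * ‖g n‖ ^ 2 ≤ 1) (hW : 0 < ∑ n ∈ F, w n) :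
    ‖F.centerMass w g‖ ^ 2 ≤ C / ∑ n ∈ F, w n := by
  set W := ∑ n ∈ F, w n
  have hterm : ∀ n ∈ F, ‖w n • g n‖ ^ 2 ≤ w n := fun n hn => by
    calc ‖w n • g n‖ ^ 2 = w n * (w n * ‖g n‖ ^ 2) := by
          rw [norm_smul, mul_pow, Real.norm_eq_abs, sq_abs]; ring
      _ ≤ w n := mul_le_of_le_one_right (hw n hn) (hwg n hn)
  calc ‖F.centerMass w g‖ ^ 2 = (W ^ 2)⁻¹ * ‖∑ n ∈ F, w n • g n‖ ^ 2 := by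
        rw [Finset.centerMass, norm_smul, mul_pow, norm_inv, Real.norm_of_nonneg hW.le, inv_pow]
    _ ≤ (W ^ 2)⁻¹ * (C * W) := by
        gcongr
        exact (norm_sum_sq_le_of_overlap_le (encard_smul_overlap_le hC w)).trans
          (mul_le_mul_of_nonneg_left (Finset.sum_le_sum hterm) C.cast_nonneg)
    _ = C / W := by field_simp

end BoundedOverlap

section Differences

variable {Λ Λ' : Set ℕ}

theorem encard_inter_Ico_le {d : ℝ} (hd : 0 < d)
    (hΛ : ∀ m ∈ Λ, ∀ n ∈ Λ, m < n → d * m ≤ n) (x : ℝ) (C : ℕ) :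
    (Λ ∩ {n : ℕ | (n : ℝ) ∈ Ico x (d ^ C * x)}).encard ≤ C := by
  have hone (y : ℝ) : (Λ ∩ {n : ℕ | (n : ℝ) ∈ Ico y (d * y)}).encard ≤ 1 := by
    have hlt {m n : ℕ} (hm : m ∈ Λ) (hn : n ∈ Λ) (hym : y ≤ m) (hny : n < d * y) : ¬ m < n :=
      fun hmn => (hΛ m hm n hn hmn).not_gt (hny.trans_le (by gcongr))
    rw [encard_le_one_iff]
    rintro m n ⟨hm, hym, hmy⟩ ⟨hn, hyn, hny⟩
    exact le_antisymm (not_lt.1 (hlt hn hm hyn hmy)) (not_lt.1 (hlt hm hn hym hny))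
  induction C with
  | zero => simp
  | succ C ih =>
    have hsplit : Λ ∩ {n : ℕ | (n : ℝ) ∈ Ico x (d ^ (C + 1) * x)} ⊆
        (Λ ∩ {n : ℕ | (n : ℝ) ∈ Ico x (d ^ C * x)}) ∪
          (Λ ∩ {n : ℕ | (n : ℝ) ∈ Ico (d ^ C * x) (d * (d ^ C * x))}) := by
      rintro n ⟨hn, hxn, hnx⟩
      rw [pow_succ', mul_assoc] at hnx
      rcases lt_or_ge (n : ℝ) (d ^ C * x) with hlt | hge
      · exact Or.inl ⟨hn, hxn, hlt⟩
      · exact Or.inr ⟨hn, hge, hnx⟩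
    calc _ ≤ _ := (encard_le_encard hsplit).trans (encard_union_le _ _)
      _ ≤ ((C + 1 : ℕ) : ℕ∞) := by push_cast; exact add_le_add ih (hone _)

theorem HadLac.bddDifferences (hΛ : HadLac Λ) : BddDifferences Λ := by
  obtain ⟨d, hd, hΛ⟩ := hΛ
  -- If `n` and `n + r` both lie in `Λ`, then `d n ≤ n + r`, so `n + r ≤ d / (d - 1) * r`: the
  -- larger elements of such pairs lie in boundedly many of the intervals `[dᵏ r, dᵏ⁺¹ r)`.
  obtain ⟨C, hC⟩ := pow_unbounded_of_one_lt (d / (d - 1)) hd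
  refine ⟨C, fun r hr => ?_⟩
  rw [← (add_left_injective r).encard_image]
  refine (encard_le_encard ?_).trans (encard_inter_Ico_le (by positivity) hΛ r C)
  rintro _ ⟨n, ⟨hn, hnr⟩, rfl⟩
  refine ⟨hnr, by simp, ?_⟩
  have hd' : 0 < d - 1 := sub_pos.2 hd
  have hgap := hΛ n hn (n + r) hnr (Nat.lt_add_of_pos_right hr)
  push_cast at hgap ⊢
  calc (n : ℝ) + r ≤ d / (d - 1) * r := by
        rw [div_mul_eq_mul_div, le_div_iff₀ hd']
        linarith
    _ < d ^ C * r := mul_lt_mul_of_pos_right hC (Nat.cast_pos.2 hr)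

theorem BddDifferences.mono (hΛ : BddDifferences Λ) (hsub : Λ' ⊆ Λ) : BddDifferences Λ' := by
  obtain ⟨C, hC⟩ := hΛ
  refine ⟨C, fun r hr => (encard_le_encard ?_).trans (hC r hr)⟩
  exact fun n hn => ⟨hsub hn.1, hsub hn.2⟩

theorem BddDifferences.eventually_gap (hΛ : BddDifferences Λ) (m : ℕ) :
    ∀ᶠ n in atTop, n ∈ Λ → ∀ k ∈ Λ, k < n → k + m < n := by
  obtain ⟨C, hC⟩ := hΛ
  have hfin : (⋃ r ∈ Finset.Icc 1 m, {n | n ∈ Λ ∧ n + r ∈ Λ}).Finite :=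
    Finset.finite_toSet _ |>.biUnion fun r hr =>
      finite_of_encard_le_coe (hC r (Finset.mem_Icc.1 hr).1)
  obtain ⟨b, hb⟩ := hfin.bddAbove
  filter_upwards [eventually_gt_atTop (b + m)] with n hn hnΛ k hk hkn
  by_contra! hclose
  have hkn' : k + (n - k) = n := Nat.add_sub_cancel' hkn.le
  have hkb : k ≤ b := hb <| mem_iUnion₂.2
    ⟨n - k, Finset.mem_Icc.2 ⟨by omega, by omega⟩, hk, hkn'.symm ▸ hnΛ⟩
  omega

end Differences

section BackwardShift

variable (h : H2 X)

@[simp]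
theorem bshift_iterate_apply (n i : ℕ) : (bshift^[n] h) i = h (n + i) := by
  induction n generalizing i with
  | zero => simp
  | succ n ih =>
    rw [Function.iterate_succ_apply']
    exact (ih (i + 1)).trans (congrArg h (by omega))

theorem bshift_iterate_sub (f g : H2 X) (n : ℕ) :
    bshift^[n] (f - g) = bshift^[n] f - bshift^[n] g := by
  ext i
  simp

theorem norm_sq_eq_sum_range_add_norm_bshift_iterate_sq (n : ℕ) :
    ‖h‖ ^ 2 = ∑ i ∈ Finset.range n, ‖h i‖ ^ 2 + ‖bshift^[n] h‖ ^ 2 := by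
  refine (hasSum_norm_sq_lp_two h).unique ?_
  rw [add_comm]
  refine (hasSum_nat_add_iff n).1 ?_
  simpa only [bshift_iterate_apply, add_comm n] using hasSum_norm_sq_lp_two (bshift^[n] h)

theorem norm_bshift_iterate_sq (n : ℕ) :
    ‖bshift^[n] h‖ ^ 2 = ‖h n‖ ^ 2 + ‖bshift^[n + 1] h‖ ^ 2 := by
  simpa [Function.iterate_succ_apply'] using
    norm_sq_eq_sum_range_add_norm_bshift_iterate_sq (bshift^[n] h) 1

theorem tendsto_norm_bshift_iterate_sq :
    Tendsto (fun n => ‖bshift^[n] h‖ ^ 2) atTop (𝓝 0) := by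
  have htail (n : ℕ) : ‖bshift^[n] h‖ ^ 2 = ∑' i, ‖h (i + n)‖ ^ 2 := by
    simpa only [bshift_iterate_apply, add_comm n] using
      (hasSum_norm_sq_lp_two (bshift^[n] h)).tsum_eq.symm
  simpa only [htail] using tendsto_sum_nat_add fun i => ‖h i‖ ^ 2

variable {h}

theorem norm_bshift_iterate_of_forall_lt {k : ℕ} (hk : ∀ i < k, h i = 0) :
    ‖bshift^[k] h‖ = ‖h‖ := by
  have hsum : ∑ i ∈ Finset.range k, ‖h i‖ ^ 2 = 0 :=
    Finset.sum_eq_zero fun i hi => by simp [hk i (Finset.mem_range.1 hi)]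
  refine (pow_left_inj₀ (norm_nonneg _) (norm_nonneg _) two_ne_zero).1 ?_
  rw [norm_sq_eq_sum_range_add_norm_bshift_iterate_sq h k, hsum, zero_add]

theorem norm_bshift_iterate_pos (hinf : (spec h).Infinite) (n : ℕ) : 0 < ‖bshift^[n] h‖ := by
  obtain ⟨k, hk, hnk⟩ := hinf.exists_gt n
  refine norm_pos_iff.2 fun hzero => hk ?_
  have happly := bshift_iterate_apply h n (k - n)
  rwa [hzero, Nat.add_sub_cancel' hnk.le, lp.coeFn_zero, Pi.zero_apply, eq_comm] at happly

theorem tailWeight_nonneg (h : H2 X) (n : ℕ) : 0 ≤ tailWeight h n := by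
  unfold tailWeight
  positivity

theorem not_summable_tailWeight (hinf : (spec h).Infinite) : ¬ Summable (tailWeight h) := by
  have hdini := not_summable_sub_div_of_tendsto_zero
    (fun n => pow_pos (norm_bshift_iterate_pos hinf n) 2) (tendsto_norm_bshift_iterate_sq h)
  refine (summable_congr fun n => ?_).not.1 hdini
  rw [norm_bshift_iterate_sq h n, add_sub_cancel_right, tailWeight]

end BackwardShift

section ShiftRemainder

variable {h : H2 X} {m n i : ℕ}

theorem BddDifferences.eventually_gapBefore (hΛ : BddDifferences (spec h)) (m : ℕ) :
    ∀ᶠ n in atTop, h n ≠ 0 → GapBefore h m n := by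
  filter_upwards [hΛ.eventually_gap m, eventually_ge_atTop m] with n hgap hmn hn
  refine ⟨hmn, hn, fun i hi => ?_⟩
  by_contra hne
  have := hgap hn (n - m + i) hne (by omega)
  omega

theorem shiftRemainder_apply_of_lt (hmn : m ≤ n) (hmi : m < i) :
    shiftRemainder h m n i = h (n + (i - m)) := by
  have hindex : n - m + i = n + (i - m) := by omega
  simp [shiftRemainder, hmi.ne', hindex]

theorem shiftRemainder_apply_of_le (hn : GapBefore h m n) (hi : i ≤ m) :
    shiftRemainder h m n i = 0 := by
  rcases hi.lt_or_eq with hlt | rfl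
  · simp [shiftRemainder, hlt.ne, hn.2.2 i hlt]
  · simp [shiftRemainder, Nat.sub_add_cancel hn.1]

theorem norm_shiftRemainder (hn : GapBefore h m n) :
    ‖shiftRemainder h m n‖ = ‖bshift^[n + 1] h‖ := by
  have hshift : bshift^[m + 1] (shiftRemainder h m n) = bshift^[n + 1] h := by
    ext i
    rw [bshift_iterate_apply, shiftRemainder_apply_of_lt hn.1 (by omega), bshift_iterate_apply]
    exact congrArg h (by omega)
  rw [← hshift, norm_bshift_iterate_of_forall_lt]
  exact fun i hi => shiftRemainder_apply_of_le hn (Nat.lt_succ_iff.1 hi)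

variable {C : ℕ} {F : Finset ℕ}

theorem encard_shiftRemainder_overlap_le
    (hC : ∀ r > 0, {n | n ∈ spec h ∧ n + r ∈ spec h}.encard ≤ C)
    (hF : ∀ n ∈ F, GapBefore h m n) (i : ℕ) :
    {n | n ∈ F ∧ shiftRemainder h m n i ≠ 0}.encard ≤ C := by
  rcases le_or_gt i m with hi | hi
  · have hempty : {n | n ∈ F ∧ shiftRemainder h m n i ≠ 0} = ∅ :=
      eq_empty_of_forall_notMem fun n hn => hn.2 (shiftRemainder_apply_of_le (hF n hn.1) hi)
    simp [hempty]
  · refine (encard_le_encard ?_).trans (hC (i - m) (Nat.sub_pos_of_lt hi))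
    rintro n ⟨hn, hne⟩
    rw [shiftRemainder_apply_of_lt (hF n hn).1 hi] at hne
    exact ⟨(hF n hn).2.1, hne⟩

theorem norm_centerMass_shiftRemainder_sq_le
    (hC : ∀ r > 0, {n | n ∈ spec h ∧ n + r ∈ spec h}.encard ≤ C)
    (hF : ∀ n ∈ F, GapBefore h m n) (hW : 0 < ∑ n ∈ F, tailWeight h n) :
    ‖F.centerMass (tailWeight h) fun n => ‖h n‖⁻¹ • shiftRemainder h m n‖ ^ 2 ≤
      C / ∑ n ∈ F, tailWeight h n := by
  refine norm_centerMass_sq_le_of_overlap_le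
    (encard_smul_overlap_le (encard_shiftRemainder_overlap_le hC hF) _)
    (fun n _ => tailWeight_nonneg h n) (fun n hn => ?_) hW
  have hne : ‖h n‖ ≠ 0 := norm_ne_zero_iff.2 (hF n hn).2.1
  rw [norm_smul, norm_inv, norm_norm, norm_shiftRemainder (hF n hn), tailWeight]
  calc ‖h n‖ ^ 2 / ‖bshift^[n + 1] h‖ ^ 2 * (‖h n‖⁻¹ * ‖bshift^[n + 1] h‖) ^ 2
      = ‖bshift^[n + 1] h‖ ^ 2 / ‖bshift^[n + 1] h‖ ^ 2 := by field_simp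
    _ ≤ 1 := div_self_le_one _

theorem norm_centerMass_bshift_sub_single_le
    (hC : ∀ r > 0, {n | n ∈ spec h ∧ n + r ∈ spec h}.encard ≤ C)
    (hF : ∀ n ∈ F, GapBefore h m n) (hW : 0 < ∑ n ∈ F, tailWeight h n) {v : X} {δ : ℝ}
    (hv : ∀ n ∈ F, ‖h n‖⁻¹ • h n ∈ Metric.closedBall v δ) :
    ‖(F.centerMass (tailWeight h) fun n => ‖h n‖⁻¹ • bshift^[n - m] h) - lp.single 2 m v‖ ≤
      √(C / ∑ n ∈ F, tailWeight h n) + δ := by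
  set w := tailWeight h
  set r := F.centerMass w fun n => ‖h n‖⁻¹ • shiftRemainder h m n
  set u := F.centerMass w fun n => ‖h n‖⁻¹ • h n
  have hr : ‖r‖ ≤ √(C / ∑ n ∈ F, w n) :=
    Real.le_sqrt_of_sq_le (norm_centerMass_shiftRemainder_sq_le hC hF hW)
  have hu : ‖u - v‖ ≤ δ := by
    rw [← dist_eq_norm]
    exact (convex_closedBall v δ).centerMass_mem (fun n _ => tailWeight_nonneg h n) hW hv
  have hsplit : (F.centerMass w fun n => ‖h n‖⁻¹ • bshift^[n - m] h) =
      r + lp.single 2 m u := by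
    let L := lp.singleContinuousLinearMap ℝ (fun _ : ℕ => X) 2 m
    have hsingle : (lp.single 2 m u : H2 X) =
        F.centerMass w fun n => ‖h n‖⁻¹ • (lp.single 2 m (h n) : H2 X) := by
      change L u = F.centerMass w fun n => ‖h n‖⁻¹ • L (h n)
      simp only [u, Finset.centerMass, map_smul, map_sum]
    simp only [hsingle, r, Finset.centerMass, shiftRemainder, smul_sub, Finset.sum_sub_distrib,
      sub_add_cancel]
  calc _ = ‖r + lp.single 2 m (u - v)‖ := by rw [hsplit, lp.single_sub, add_sub_assoc]
    _ ≤ ‖r‖ + ‖u - v‖ := by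
      simpa only [lp.norm_single (p := 2) (by norm_num)] using
        norm_add_le r (lp.single 2 m (u - v))
    _ ≤ _ := add_le_add hr hu

end ShiftRemainder

theorem single_mem_of_forall_nhds_not_summable {h : H2 X} (hΛ : BddDifferences (spec h)) {v : X}
    (hv : ∀ U ∈ 𝓝 v, ¬ Summable (((fun n => ‖h n‖⁻¹ • h n) ⁻¹' U).indicator (tailWeight h)))
    {E : Submodule ℂ (H2 X)} (hE : IsClosed (E : Set (H2 X)))
    (hshift : ∀ᶠ n in atTop, bshift^[n] h ∈ E) (m : ℕ) : lp.single 2 m v ∈ E := by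
  have ⟨C, hC⟩ := hΛ
  obtain ⟨n₀, hn₀⟩ := eventually_atTop.1 <|
    (hΛ.eventually_gapBefore m).and ((tendsto_sub_atTop_nat m).eventually hshift)
  refine hE.closure_subset (Metric.mem_closure_iff.2 fun ε hε => ?_)
  set A := (fun n => ‖h n‖⁻¹ • h n) ⁻¹' Metric.closedBall v (ε / 2)
  obtain ⟨F, hF, hM⟩ := exists_finset_le_sum_of_not_summable
    (fun n => indicator_nonneg (fun n _ => tailWeight_nonneg h n) n)
    (hv _ (Metric.closedBall_mem_nhds v (half_pos hε))) n₀ (C / (ε / 2) ^ 2 + 1)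
  have hFA : ∀ n ∈ F, n ∈ A := fun n hn => mem_of_indicator_ne_zero (hF n hn).2
  have hFne : ∀ n ∈ F, h n ≠ 0 := fun n hn h0 =>
    (hF n hn).2 (by simp [tailWeight, h0])
  rw [Finset.sum_congr rfl fun n hn => indicator_of_mem (hFA n hn) _] at hM
  have hlarge : C / (ε / 2) ^ 2 < ∑ n ∈ F, tailWeight h n := (lt_add_one _).trans_le hM
  have hW : 0 < ∑ n ∈ F, tailWeight h n := lt_of_le_of_lt (by positivity) hlarge
  have hsmall : √(C / ∑ n ∈ F, tailWeight h n) < ε / 2 := by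
    rw [Real.sqrt_lt' (half_pos hε)]
    exact (div_lt_comm₀ (by positivity) hW).1 hlarge
  refine ⟨F.centerMass (tailWeight h) fun n => ‖h n‖⁻¹ • bshift^[n - m] h,
    E.smul_of_tower_mem _ (E.sum_mem fun n hn => E.smul_of_tower_mem _
      (E.smul_of_tower_mem _ (hn₀ n (hF n hn).1).2)), ?_⟩
  rw [dist_comm, dist_eq_norm]
  have hbound := norm_centerMass_bshift_sub_single_le hC
    (fun n hn => (hn₀ n (hF n hn).1).1 (hFne n hn)) hW hFA
  linarith

section Directions

variable {h : H2 X}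

theorem closure_directions_subset_sphere (a : ℕ → X) :
    closure (directions a) ⊆ Metric.sphere 0 1 := by
  refine closure_minimal ?_ Metric.isClosed_sphere
  rintro _ ⟨k, hk, rfl⟩
  rw [mem_sphere_zero_iff_norm, norm_smul, norm_inv, norm_norm,
    inv_mul_cancel₀ (norm_ne_zero_iff.2 hk)]

theorem closure_directions_subset {a : ℕ → X} {Y : Submodule ℂ X} (hY : IsClosed (Y : Set X))
    (ha : ∀ k, a k ∈ Y) : closure (directions a) ⊆ Y := by
  refine closure_minimal ?_ hY
  rintro _ ⟨k, -, rfl⟩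
  exact Y.smul_of_tower_mem _ (ha k)

theorem exists_direction_forall_nhds_not_summable (hinf : (spec h).Infinite)
    (hK : IsCompact (closure (directions h))) :
    ∃ v ∈ closure (directions h), ∀ U ∈ 𝓝 v,
      ¬ Summable (((fun n => ‖h n‖⁻¹ • h n) ⁻¹' U).indicator (tailWeight h)) := by
  refine exists_forall_nhds_not_summable_indicator hK ?_
  rw [indicator_eq_self.2]
  · exact not_summable_tailWeight hinf
  · intro n hn
    exact subset_closure ⟨n, fun h0 => hn (by simp [tailWeight, h0]), rfl⟩

end Directions

section HardySubspaces

variable {f q : H2 X} {Y : Submodule ℂ X}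

theorem single_mem_H2sub {x : X} (hx : x ∈ Y) (n : ℕ) : lp.single 2 n x ∈ H2sub Y := by
  intro k
  rcases eq_or_ne k n with rfl | hkn
  · simpa using hx
  · simp [hkn]

theorem H2sub_le_of_forall_single_mem {E : Submodule ℂ (H2 X)} (hE : IsClosed (E : Set (H2 X)))
    (hY : ∀ x ∈ Y, ∀ n, lp.single 2 n x ∈ E) : H2sub Y ≤ E := fun g hg =>
  hE.mem_of_tendsto (lp.hasSum_single (p := 2) (by norm_num) g) <|
    Eventually.of_forall fun _ => E.sum_mem fun i _ => hY _ (hg i) i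

theorem orthogonal_H2sub_le : (H2sub Y)ᗮ ≤ H2sub Yᗮ := fun g hg k =>
  (Submodule.mem_orthogonal' _ _).2 fun y hy => by
    simpa only [lp.inner_single_right] using
      (Submodule.mem_orthogonal' _ _).1 hg _ (single_mem_H2sub hy k)

theorem spec_sub_subset (hq : q ∈ H2sub Y) (hfq : f - q ∈ (H2sub Y)ᗮ) :
    spec (f - q) ⊆ spec f := by
  intro k hk hfk
  have hfk' : (f - q) k = -q k := by simp [hfk]
  have hmem : (f - q) k ∈ Y := hfk' ▸ Y.neg_mem (hq k)
  exact hk (Submodule.disjoint_def.1 Y.orthogonal_disjoint _ hmem (orthogonal_H2sub_le hfq k))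

theorem CRC.isCompact_closure_directions [Y.HasOrthogonalProjection] (hf : CRC fun k => f k)
    (hq : q ∈ H2sub Y) (hfq : f - q ∈ (H2sub Y)ᗮ) : IsCompact (closure (directions ↑(f - q))) := by
  have hproj (k : ℕ) : Yᗮ.starProjection (f k) = (f - q) k := by
    refine Submodule.eq_starProjection_of_mem_orthogonal (orthogonal_H2sub_le hfq k) ?_
    simpa using Submodule.le_orthogonal_orthogonal Y (hq k)
  have hcompact := hf Yᗮ.starProjection
    ⟨fun x => Submodule.starProjection_eq_self_iff.2 (Submodule.starProjection_apply_mem _ x),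
      Submodule.inner_starProjection_left_eq_right _⟩
  simpa only [directions, hproj] using hcompact

end HardySubspaces

section Xinf

variable {f : H2 X}

instance [CompleteSpace X] : CompleteSpace (Xinf f) :=
  Submodule.topologicalClosure.completeSpace _

theorem isClosed_Ef (f : H2 X) : IsClosed (Ef f : Set (H2 X)) :=
  Submodule.isClosed_topologicalClosure _

theorem bshift_iterate_mem_Ef {N n : ℕ} (hn : N ≤ n) : bshift^[n] f ∈ Ef (bshift^[N] f) :=
  Submodule.le_topologicalClosure _ <| Submodule.subset_span
    ⟨_, rfl, n - N, by rw [← Function.iterate_add_apply, Nat.sub_add_cancel hn]⟩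

theorem H2sub_Xinf_le (f : H2 X) (N : ℕ) : H2sub (Xinf f) ≤ Ef (bshift^[N] f) := by
  refine H2sub_le_of_forall_single_mem (isClosed_Ef _) fun x hx n => ?_
  let L : X →L[ℂ] H2 X := lp.singleContinuousLinearMap ℂ (fun _ => X) 2 n
  have hle : Xinf f ≤ (Ef (bshift^[N] f)).comap L.toLinearMap := by
    refine Submodule.topologicalClosure_minimal _ (Submodule.span_le.2 ?_)
      ((isClosed_Ef _).preimage L.continuous)
    rintro y ⟨Y, -, hY, hy⟩
    exact hY N (single_mem_H2sub hy n)
  exact hle hx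

theorem mem_Xinf_of_forall_single_mem {v : X}
    (hv : ∀ N m : ℕ, lp.single 2 m v ∈ Ef (bshift^[N] f)) : v ∈ Xinf f := by
  refine Submodule.le_topologicalClosure _ <| Submodule.subset_span ⟨Submodule.span ℂ {v},
    Submodule.closed_of_finiteDimensional _, fun N => ?_, Submodule.mem_span_singleton_self v⟩
  refine H2sub_le_of_forall_single_mem (isClosed_Ef _) fun x hx n => ?_
  obtain ⟨c, rfl⟩ := Submodule.mem_span_singleton.1 hx
  rw [lp.single_smul]
  exact Submodule.smul_mem _ _ (hv N n)

theorem bshift_iterate_sub_mem_Ef {q : H2 X} (hq : q ∈ H2sub (Xinf f)) {N n : ℕ} (hn : N ≤ n) :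
    bshift^[n] (f - q) ∈ Ef (bshift^[N] f) := by
  have hqn : bshift^[n] q ∈ H2sub (Xinf f) := fun i => by simpa using hq (n + i)
  rw [bshift_iterate_sub]
  exact Submodule.sub_mem _ (bshift_iterate_mem_Ef hn) (H2sub_Xinf_le f N hqn)

end Xinf

theorem proj_Xinf_spec_subset_and_poly_general (f : H2 X) (hΛ : BddDifferences (spec f))
    (q : H2 X) (hK : IsCompact (closure (directions ↑(f - q)))) (hqmem : q ∈ H2sub (Xinf f))
    (hqorth : ∀ g ∈ H2sub (Xinf f), ⟪f - q, g⟫_ℂ = 0) :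
    spec (f - q) ⊆ spec f ∧ PolyH2 (f - q) := by
  have hfq : f - q ∈ (H2sub (Xinf f))ᗮ := (Submodule.mem_orthogonal' _ _).2 hqorth
  have hspec : spec (f - q) ⊆ spec f := spec_sub_subset hqmem hfq
  refine ⟨hspec, by_contra fun hinf => ?_⟩
  obtain ⟨v, hvK, hv⟩ := exists_direction_forall_nhds_not_summable hinf hK
  have hvX : v ∈ Xinf f := mem_Xinf_of_forall_single_mem fun N =>
    single_mem_of_forall_nhds_not_summable (hΛ.mono hspec) hv (isClosed_Ef _)
      ((eventually_ge_atTop N).mono fun _ => bshift_iterate_sub_mem_Ef hqmem)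
  have hvO : v ∈ (Xinf f)ᗮ :=
    closure_directions_subset (Submodule.isClosed_orthogonal _) (orthogonal_H2sub_le hfq) hvK
  have hv0 : v = 0 := Submodule.disjoint_def.1 (Xinf f).orthogonal_disjoint v hvX hvO
  exact ne_zero_of_mem_unit_sphere ⟨v, closure_directions_subset_sphere _ hvK⟩ hv0

/-- For a lacunary series `f` with c.r.c. coefficients, writing `P` for the orthogonal
projection of `H²(𝔻, X)` onto `H²(𝔻, X_∞(f))` (characterized by `P f ∈ H²(𝔻, X_∞(f))` and
`f − P f ⟂ H²(𝔻, X_∞(f))`), we have `σ(f − P f) ⊆ σ(f)` and `f − P f` is a polynomial. -/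
theorem proj_Xinf_spec_subset_and_poly {X : Type*} [NormedAddCommGroup X] [InnerProductSpace ℂ X] [CompleteSpace X]
    [TopologicalSpace.SeparableSpace X]
    (f : H2 X) (hlac : HadLac (spec f)) (hcrc : CRC fun k : ℕ => f k)
    (q : H2 X) (hqmem : q ∈ H2sub (Xinf f))
    (hqorth : ∀ g ∈ H2sub (Xinf f), ⟪f - q, g⟫_ℂ = 0) :
    spec (f - q) ⊆ spec f ∧ PolyH2 (f - q) := by
  have hfq : f - q ∈ (H2sub (Xinf f))ᗮ := (Submodule.mem_orthogonal' _ _).2 hqorth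
  exact proj_Xinf_spec_subset_and_poly_general f hlac.bddDifferences q
    (hcrc.isCompact_closure_directions hqmem hfq) hqmem hqorth

end
end
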